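/- Assume A and J are Fréchet differentiable, u ∈ U solves the primal problem (A(u)(v) = 0 for all v ∈ V), and z ∈ V solves the adjoint problem at u (A'(u)(φ)(z) = J'(u)(φ) for all φ ∈ U). Define L(û, ẑ) := J(û) − A(û)(ẑ) on U × V, and set x = (u, z), x̃ = (ũ, z̃), e = u − ũ, e* = z − z̃. Then L'(x)(x − x̃) + L'(x̃)(x − x̃) = ρ(ũ)(z − z̃) + ρ*(ũ, z̃)(u − ũ), where ρ(ũ)(·) := −A(ũ)(·) and ρ*(ũ, z̃)(·) := J'(ũ)(·) − A'(ũ)(·)(z̃), and L' denotes the Fréchet derivative of L on the product Banach space U × V. -/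

import Mathlib

section Lagrangian

variable {𝕜 U V F : Type*} [NontriviallyNormedField 𝕜]
  [NormedAddCommGroup V] [NormedSpace 𝕜 V] [NormedAddCommGroup F] [NormedSpace 𝕜 F]
  {A : U → V →L[𝕜] F} {J : U → F} {u : U} {z : V}

/-- The Lagrangian `L(u, z) = J(u) - A(u)(z)` pairing a functional `J` with the constraint
`A(u) = 0`, as a function on the product space. Values lie in a normed space `F`, with `F = 𝕜` the
classical case. -/
def lagrangian (A : U → V →L[𝕜] F) (J : U → F) (p : U × V) : F :=
  J p.1 - A p.1 p.2

/-- The primal residual `ρ(u) = -A(u)`, a continuous linear map on the space of test functions. -/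
def primalResidual (A : U → V →L[𝕜] F) (u : U) : V →L[𝕜] F :=
  -A u

theorem primalResidual_eq_zero_iff : primalResidual A u = 0 ↔ ∀ v, A u v = 0 := by
  simp [primalResidual, ContinuousLinearMap.ext_iff]

variable [NormedAddCommGroup U] [NormedSpace 𝕜 U]

/-- The adjoint residual `ρ*(u, z) = J'(u) - A'(u)(·)(z)`. It is built from `fderiv`, hence
meaningful only where `A` and `J` are differentiable. -/
noncomputable def adjointResidual (A : U → V →L[𝕜] F) (J : U → F) (u : U) (z : V) : U →L[𝕜] F :=
  fderiv 𝕜 J u - (fderiv 𝕜 A u).flip z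

theorem adjointResidual_eq_zero_iff :
    adjointResidual A J u z = 0 ↔ ∀ φ, fderiv 𝕜 A u φ z = fderiv 𝕜 J u φ := by
  rw [adjointResidual, sub_eq_zero, eq_comm, ContinuousLinearMap.ext_iff]
  simp only [ContinuousLinearMap.flip_apply]

theorem hasFDerivAt_lagrangian (hA : DifferentiableAt 𝕜 A u) (hJ : DifferentiableAt 𝕜 J u)
    (z : V) :
    HasFDerivAt (lagrangian A J) ((adjointResidual A J u z).coprod (primalResidual A u))
      (u, z) := by
  have hfst : HasFDerivAt Prod.fst (ContinuousLinearMap.fst 𝕜 U V) (u, z) := hasFDerivAt_fst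
  have hJ_fst := HasFDerivAt.comp (u, z) hJ.hasFDerivAt hfst
  have hA_fst := HasFDerivAt.comp (u, z) hA.hasFDerivAt hfst
  refine (hJ_fst.sub (hA_fst.clm_apply hasFDerivAt_snd)).congr_fderiv ?_
  ext <;> simp [adjointResidual, primalResidual]

theorem fderiv_lagrangian_eq_zero_iff (hA : DifferentiableAt 𝕜 A u) (hJ : DifferentiableAt 𝕜 J u) :
    fderiv 𝕜 (lagrangian A J) (u, z) = 0 ↔
      (∀ v, A u v = 0) ∧ ∀ φ, fderiv 𝕜 A u φ z = fderiv 𝕜 J u φ := by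
  rw [(hasFDerivAt_lagrangian hA hJ z).fderiv, ← primalResidual_eq_zero_iff,
    ← adjointResidual_eq_zero_iff, and_comm]
  simp [ContinuousLinearMap.prod_ext_iff]

theorem lagrange_derivative_identity_general {ut : U}
    (hA : DifferentiableAt 𝕜 A u) (hJ : DifferentiableAt 𝕜 J u)
    (hAt : DifferentiableAt 𝕜 A ut) (hJt : DifferentiableAt 𝕜 J ut)
    (hu : ∀ v, A u v = 0) (hz : ∀ φ, fderiv 𝕜 A u φ z = fderiv 𝕜 J u φ)
    (zt : V) (h : U) (k : V) :
    fderiv 𝕜 (lagrangian A J) (u, z) (h, k) + fderiv 𝕜 (lagrangian A J) (ut, zt) (h, k) =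
      primalResidual A ut k + adjointResidual A J ut zt h := by
  have stationary : fderiv 𝕜 (lagrangian A J) (u, z) = 0 :=
    (fderiv_lagrangian_eq_zero_iff hA hJ).2 ⟨hu, hz⟩
  rw [stationary, (hasFDerivAt_lagrangian hAt hJt zt).fderiv, ContinuousLinearMap.coprod_apply,
    zero_apply, zero_add, add_comm]

end Lagrangian

/-- With `L (û, ẑ) := J û - A û ẑ`, `u` solving the primal problem and `z` the adjoint
problem, for arbitrary `ũ, z̃` one has
`L'(u,z)(u-ũ, z-z̃) + L'(ũ,z̃)(u-ũ, z-z̃) = ρ(ũ)(z-z̃) + ρ*(ũ,z̃)(u-ũ)`,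
where `ρ(ũ)(·) = -A(ũ)(·)` and `ρ*(ũ,z̃)(·) = J'(ũ)(·) - A'(ũ)(·)(z̃)`. -/
theorem lagrange_derivative_identity {U V : Type*}
    [NormedAddCommGroup U] [NormedSpace ℝ U] [CompleteSpace U]
    [NormedAddCommGroup V] [NormedSpace ℝ V] [CompleteSpace V]
    (A : U → (V →L[ℝ] ℝ)) (J : U → ℝ)
    (hA : Differentiable ℝ A) (hJ : Differentiable ℝ J)
    (u : U) (z : V)
    (hu : ∀ v : V, A u v = 0)
    (hz : ∀ φ : U, (fderiv ℝ A u φ) z = fderiv ℝ J u φ)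
    (L : U × V → ℝ) (hL : ∀ p : U × V, L p = J p.1 - A p.1 p.2)
    (ut : U) (zt : V) :
    (fderiv ℝ L (u, z)) (u - ut, z - zt) + (fderiv ℝ L (ut, zt)) (u - ut, z - zt)
      = (-(A ut)) (z - zt) + (fderiv ℝ J ut (u - ut) - (fderiv ℝ A ut (u - ut)) zt) := by
  obtain rfl : L = lagrangian A J := funext hL
  exact lagrange_derivative_identity_general (hA u) (hJ u) (hA ut) (hJ ut) hu hz zt _ _
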